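/- Let θ > 0 and suppose ξ ∈ ℝ satisfies E[(Y−ξ)·Y·1{Y≥ξ}] = (E[Y] + θ)·E[(Y−ξ)·1{Y≥ξ}]. Set λ := 1 / E[(Y−ξ)·1{Y≥ξ}] (the denominator is strictly positive) and h*(y) := λ·(y−ξ)·1{y≥ξ}. Then h* ≥ 0, ∫ h* dμ = 1, ∫ y·h*(y) dμ(y) = E[Y] + θ, and for every measurable h : ℝ → [0,∞) with ∫ h dμ = 1 and ∫ y·h(y) dμ(y) ≥ E[Y] + θ, one has ∫ h² dμ ≥ ∫ (h*)² dμ. (Solution of the sensitivity-value program with the opposite-direction outcome constraint.) -/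

import Mathlib

open MeasureTheory

/-!
With `f = Y - ξ`, the weight `w = lam * f⁺` satisfies the pointwise Karush-Kuhn-Tucker relations
`w ^ 2 = lam * f * w` and `lam * f ≤ w`. Every feasible `h` has `∫ f * w ≤ ∫ f * h`, hence
`∫ w ^ 2 = lam * ∫ f * w ≤ lam * ∫ f * h ≤ ∫ w * h`, and this variational inequality forces
`∫ w ^ 2 ≤ ∫ h ^ 2` because `0 ≤ (w - h) ^ 2`.
-/

theorem ite_sub_eq_posPart {α : Type*} [AddCommGroup α] [LinearOrder α] [IsOrderedAddMonoid α]
    (a b : α) : (if b ≤ a then a - b else 0) = (a - b)⁺ := by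
  split_ifs with hba
  · exact (posPart_of_nonneg (sub_nonneg.2 hba)).symm
  · exact (posPart_of_nonpos (sub_nonpos.2 (le_of_not_ge hba))).symm

theorem isOpenPosMeasure_withDensity_ofReal {X : Type*} [TopologicalSpace X] [MeasurableSpace X]
    {μ : Measure X} [μ.IsOpenPosMeasure] {p : X → ℝ} (hp : AEMeasurable p μ)
    (hp_pos : ∀ᵐ x ∂μ, 0 < p x) :
    (μ.withDensity fun x => ENNReal.ofReal (p x)).IsOpenPosMeasure :=
  (withDensity_absolutelyContinuous' hp.ennreal_ofReal
    (hp_pos.mono fun _ hx => (ENNReal.ofReal_pos.2 hx).ne')).isOpenPosMeasure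

section

variable {Ω : Type*} [MeasurableSpace Ω] {μ : Measure Ω} {f g h : Ω → ℝ}

theorem integral_posPart_pos_iff (hf : Integrable f μ) :
    0 < ∫ ω, (f ω)⁺ ∂μ ↔ 0 < μ {ω | 0 < f ω} := by
  have hsupport : (Function.support fun ω => (f ω)⁺) = {ω | 0 < f ω} := by
    ext ω
    simp
  rw [integral_pos_iff_support_of_nonneg (fun ω => posPart_nonneg (f ω)) hf.pos_part, hsupport]

theorem setIntegral_sub_mul_eq_integral_posPart_mul (hf : AEMeasurable f μ) (c : ℝ) :
    ∫ ω in {ω | c ≤ f ω}, (f ω - c) * g ω ∂μ = ∫ ω, (f ω - c)⁺ * g ω ∂μ := by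
  rw [← integral_indicator₀ (nullMeasurableSet_le aemeasurable_const hf)]
  congr 1 with ω
  simp only [Set.indicator_apply, Set.mem_ofPred_eq, ← ite_sub_eq_posPart, ite_mul, zero_mul]

theorem setIntegral_sub_eq_integral_posPart (hf : AEMeasurable f μ) (c : ℝ) :
    ∫ ω in {ω | c ≤ f ω}, (f ω - c) ∂μ = ∫ ω, (f ω - c)⁺ ∂μ := by
  simpa only [mul_one] using setIntegral_sub_mul_eq_integral_posPart_mul (g := fun _ => 1) hf c

theorem integral_sub_const_mul (hfg : Integrable (fun ω => f ω * g ω) μ) (hg : Integrable g μ)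
    (c : ℝ) : ∫ ω, (f ω - c) * g ω ∂μ = ∫ ω, f ω * g ω ∂μ - c * ∫ ω, g ω ∂μ := by
  simp only [sub_mul]
  rw [integral_sub hfg (hg.const_mul c), integral_const_mul]

theorem integral_sq_le_of_le_integral_mul (hf : MemLp f 2 μ) (hg : MemLp g 2 μ)
    (hfg : ∫ ω, f ω ^ 2 ∂μ ≤ ∫ ω, f ω * g ω ∂μ) :
    ∫ ω, f ω ^ 2 ∂μ ≤ ∫ ω, g ω ^ 2 ∂μ := by
  have two_mul_le : 2 * ∫ ω, f ω * g ω ∂μ ≤ ∫ ω, f ω ^ 2 ∂μ + ∫ ω, g ω ^ 2 ∂μ := by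
    rw [← integral_const_mul, ← integral_add hf.integrable_sq hg.integrable_sq]
    refine integral_mono ((hf.integrable_mul hg).const_mul 2)
      (hf.integrable_sq.add hg.integrable_sq) fun ω => ?_
    simpa only [mul_assoc] using two_mul_le_add_sq (f ω) (g ω)
  linarith

theorem lintegral_ofReal_sq_le_of_integral_sq_le (hf : MemLp f 2 μ) (hg : AEStronglyMeasurable g μ)
    (hfg : MemLp g 2 μ → ∫ ω, f ω ^ 2 ∂μ ≤ ∫ ω, g ω ^ 2 ∂μ) :
    ∫⁻ ω, ENNReal.ofReal (f ω ^ 2) ∂μ ≤ ∫⁻ ω, ENNReal.ofReal (g ω ^ 2) ∂μ := by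
  have sq_nonneg_ae (u : Ω → ℝ) : 0 ≤ᵐ[μ] fun ω => u ω ^ 2 := .of_forall fun ω => sq_nonneg (u ω)
  rcases eq_or_ne (∫⁻ ω, ENNReal.ofReal (g ω ^ 2) ∂μ) ⊤ with htop | hfinite
  · exact htop ▸ le_top
  have hg2 : MemLp g 2 μ := (memLp_two_iff_integrable_sq hg).2
    ⟨hg.pow 2, (hasFiniteIntegral_iff_ofReal (sq_nonneg_ae g)).2 hfinite.lt_top⟩
  rw [← ofReal_integral_eq_lintegral_ofReal hf.integrable_sq (sq_nonneg_ae f),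
    ← ofReal_integral_eq_lintegral_ofReal hg2.integrable_sq (sq_nonneg_ae g)]
  exact ENNReal.ofReal_le_ofReal (hfg hg2)

theorem integral_sq_const_mul_posPart_le (hf : MemLp f 2 μ) (hh : MemLp h 2 μ)
    (h_nonneg : 0 ≤ᵐ[μ] h) {c : ℝ} (hc : 0 ≤ c)
    (hle : ∫ ω, f ω * (c * (f ω)⁺) ∂μ ≤ ∫ ω, f ω * h ω ∂μ) :
    ∫ ω, (c * (f ω)⁺) ^ 2 ∂μ ≤ ∫ ω, h ω ^ 2 ∂μ := by
  have hw : MemLp (fun ω => c * (f ω)⁺) 2 μ := hf.pos_part.const_mul c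
  have sq_eq (ω : Ω) : (c * (f ω)⁺) ^ 2 = c * (f ω * (c * (f ω)⁺)) := by
    rcases le_total 0 (f ω) with hω | hω
    · rw [posPart_of_nonneg hω]
      ring
    · simp [posPart_of_nonpos hω]
  refine integral_sq_le_of_le_integral_mul hw hh ?_
  calc ∫ ω, (c * (f ω)⁺) ^ 2 ∂μ
      = c * ∫ ω, f ω * (c * (f ω)⁺) ∂μ := by simp only [sq_eq, integral_const_mul]
    _ ≤ c * ∫ ω, f ω * h ω ∂μ := mul_le_mul_of_nonneg_left hle hc
    _ = ∫ ω, c * (f ω * h ω) ∂μ := (integral_const_mul c _).symm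
    _ ≤ ∫ ω, c * (f ω)⁺ * h ω ∂μ := by
      refine integral_mono_ae ((hf.integrable_mul hh).const_mul c) (hw.integrable_mul hh) ?_
      filter_upwards [h_nonneg] with ω hω
      rw [← mul_assoc]
      exact mul_le_mul_of_nonneg_right (mul_le_mul_of_nonneg_left (le_posPart (f ω)) hc) hω

theorem integral_sq_const_mul_posPart_sub_le [IsFiniteMeasure μ] (hf : MemLp f 2 μ)
    (hh : MemLp h 2 μ) (h_nonneg : 0 ≤ᵐ[μ] h) {c ξ : ℝ} (hc : 0 ≤ c)
    (hmass : ∫ ω, h ω ∂μ = ∫ ω, c * (f ω - ξ)⁺ ∂μ)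
    (hmean : ∫ ω, f ω * (c * (f ω - ξ)⁺) ∂μ ≤ ∫ ω, f ω * h ω ∂μ) :
    ∫ ω, (c * (f ω - ξ)⁺) ^ 2 ∂μ ≤ ∫ ω, h ω ^ 2 ∂μ := by
  have hfξ : MemLp (fun ω => f ω - ξ) 2 μ := hf.sub (memLp_const ξ)
  have hw : MemLp (fun ω => c * (f ω - ξ)⁺) 2 μ := hfξ.pos_part.const_mul c
  refine integral_sq_const_mul_posPart_le hfξ hh h_nonneg hc ?_
  rw [integral_sub_const_mul (hf.integrable_mul hw) (hw.integrable one_le_two),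
    integral_sub_const_mul (hf.integrable_mul hh) (hh.integrable one_le_two), hmass]
  exact sub_le_sub_right hmean _

theorem stmt_11_general [IsFiniteMeasure μ] {Y : Ω → ℝ} (hY : MemLp Y 2 μ) {ξ m : ℝ}
    (hξ : 0 < μ {ω | ξ < Y ω})
    (hroot : (∫ ω in {ω | ξ ≤ Y ω}, (Y ω - ξ) * Y ω ∂μ) =
      m * ∫ ω in {ω | ξ ≤ Y ω}, (Y ω - ξ) ∂μ)
    {lam : ℝ} (hlam : lam = (∫ ω in {ω | ξ ≤ Y ω}, (Y ω - ξ) ∂μ)⁻¹)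
    {hstar : Ω → ℝ} (hhstar : ∀ ω, hstar ω = if ξ ≤ Y ω then lam * (Y ω - ξ) else 0) :
    0 < (∫ ω in {ω | ξ ≤ Y ω}, (Y ω - ξ) ∂μ) ∧
    (∀ ω, 0 ≤ hstar ω) ∧
    (∫ ω, hstar ω ∂μ) = 1 ∧
    (∫ ω, Y ω * hstar ω ∂μ) = m ∧
    ∀ h : Ω → ℝ, Measurable h → (∀ ω, 0 ≤ h ω) →
      (∫ ω, h ω ∂μ) = 1 → m ≤ (∫ ω, Y ω * h ω ∂μ) →
      (∫⁻ ω, ENNReal.ofReal (hstar ω ^ 2) ∂μ) ≤ ∫⁻ ω, ENNReal.ofReal (h ω ^ 2) ∂μ := by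
  obtain rfl : hstar = fun ω => lam * (Y ω - ξ)⁺ := by
    funext ω
    rw [hhstar, ← ite_sub_eq_posPart, mul_ite, mul_zero]
  have hYm : AEMeasurable Y μ := hY.aestronglyMeasurable.aemeasurable
  rw [setIntegral_sub_eq_integral_posPart hYm] at hroot hlam ⊢
  rw [setIntegral_sub_mul_eq_integral_posPart_mul hYm] at hroot
  have hYξ : MemLp (fun ω => Y ω - ξ) 2 μ := hY.sub (memLp_const ξ)
  have hdenom : 0 < ∫ ω, (Y ω - ξ)⁺ ∂μ :=
    (integral_posPart_pos_iff (hYξ.integrable one_le_two)).2 (by simpa only [sub_pos] using hξ)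
  have hlam_nonneg : 0 ≤ lam := hlam ▸ inv_nonneg.2 hdenom.le
  have hmass : ∫ ω, lam * (Y ω - ξ)⁺ ∂μ = 1 := by
    rw [integral_const_mul, hlam, inv_mul_cancel₀ hdenom.ne']
  have hmean : ∫ ω, Y ω * (lam * (Y ω - ξ)⁺) ∂μ = m := by
    calc ∫ ω, Y ω * (lam * (Y ω - ξ)⁺) ∂μ
        = lam * ∫ ω, (Y ω - ξ)⁺ * Y ω ∂μ := by
          rw [← integral_const_mul]
          congr 1 with ω
          ring
      _ = m * ∫ ω, lam * (Y ω - ξ)⁺ ∂μ := by rw [hroot, integral_const_mul, mul_left_comm]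
      _ = m := by rw [hmass, mul_one]
  refine ⟨hdenom, fun ω => mul_nonneg hlam_nonneg (posPart_nonneg _), hmass, hmean,
    fun h h_meas h_nonneg h_mass h_mean => ?_⟩
  exact lintegral_ofReal_sq_le_of_integral_sq_le (hYξ.pos_part.const_mul lam)
    h_meas.aestronglyMeasurable fun hh =>
      integral_sq_const_mul_posPart_sub_le hY hh (.of_forall h_nonneg) hlam_nonneg
        (h_mass.trans hmass.symm) (hmean.trans_le h_mean)

end

/-- Solution of the sensitivity-value program with the opposite-direction outcome
constraint: with `ξ` solving `E[(Y-ξ) Y 1{Y≥ξ}] = (E[Y]+θ) E[(Y-ξ) 1{Y≥ξ}]`,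
`λ = 1 / E[(Y-ξ) 1{Y≥ξ}]` and `h*(y) = λ (y-ξ) 1{y≥ξ}`, the weight `h*` is nonnegative,
has mean one, attains `∫ y h*(y) dμ = E[Y] + θ`, and minimizes the second moment among
nonnegative mean-one weights `h` with `∫ y h(y) dμ ≥ E[Y] + θ`. -/
theorem stmt_11 (μ : Measure ℝ) [IsProbabilityMeasure μ] (p : ℝ → ℝ)
    (hp_cont : Continuous p) (hp_pos : ∀ x, 0 < p x)
    (hμ : μ = MeasureTheory.volume.withDensity fun x => ENNReal.ofReal (p x))
    (hmom : Integrable (fun y => y ^ 2) μ)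
    (θ : ℝ) (hθ : 0 < θ) (ξ : ℝ)
    (hroot : (∫ y in Set.Ici ξ, (y - ξ) * y ∂μ) =
      ((∫ y, y ∂μ) + θ) * ∫ y in Set.Ici ξ, (y - ξ) ∂μ)
    (lam : ℝ) (hlam : lam = (∫ y in Set.Ici ξ, (y - ξ) ∂μ)⁻¹)
    (hstar : ℝ → ℝ) (hhstar : ∀ y, hstar y = if ξ ≤ y then lam * (y - ξ) else 0) :
    0 < (∫ y in Set.Ici ξ, (y - ξ) ∂μ) ∧
    (∀ y, 0 ≤ hstar y) ∧
    (∫ y, hstar y ∂μ) = 1 ∧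
    (∫ y, y * hstar y ∂μ) = (∫ y, y ∂μ) + θ ∧
    ∀ h : ℝ → ℝ, Measurable h → (∀ y, 0 ≤ h y) →
      (∫ y, h y ∂μ) = 1 → (∫ y, y ∂μ) + θ ≤ (∫ y, y * h y ∂μ) →
      (∫⁻ y, ENNReal.ofReal (hstar y ^ 2) ∂μ) ≤ ∫⁻ y, ENNReal.ofReal (h y ^ 2) ∂μ := by
  have : μ.IsOpenPosMeasure :=
    hμ ▸ isOpenPosMeasure_withDensity_ofReal hp_cont.aemeasurable (.of_forall hp_pos)
  exact stmt_11_general ((memLp_two_iff_integrable_sq aestronglyMeasurable_id).2 hmom)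
    (Measure.measure_Ioi_pos μ ξ) hroot hlam hhstar
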